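/- arXiv:2207.00766 — 3 statements merged into one kernel-verified Lean document; each statement's English description precedes it below -/
import Mathlib

section
/- Fix an integer q ≥ 2. Let (h_k)_{k≥0} be the sequence of rational numbers defined by h_0 = 1 and, for k ≥ 1, by the recurrence h_k = ((q-1)k+1)/k · Σ h_{j_1}·h_{j_2}·…·h_{j_q}, where the sum runs over all q-tuples (j_1,…,j_q) of nonnegative integers with j_1 + … + j_q = k−1. Then for every k ≥ 0 one has h_k = q^k·((q-1)k+1)^{k-1}/k!. -/
open Polynomial in
/-- Scaled Abel polynomials. -/
noncomputable def abelP (c p : ℚ) : ℕ → ℚ[X]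
  | 0 => 1
  | n + 1 => C (c ^ (n + 1) / ((n + 1).factorial : ℚ)) * X * (X + C (p * (n + 1))) ^ n

open Polynomial in
theorem abelP_deriv (c p : ℚ) (n : ℕ) :
    derivative (abelP c p (n + 1)) = C c * (abelP c p n).comp (X + C p) := by
  cases n with
  | zero => simp [abelP]
  | succ n =>
    apply Polynomial.funext
    intro x
    have hf : ((n.factorial : ℕ) : ℚ) ≠ 0 := by positivity
    have h1 : (n : ℚ) + 1 ≠ 0 := by positivity
    have h2 : (n : ℚ) + 1 + 1 ≠ 0 := by positivity
    have e : x + p + p * ((n : ℚ) + 1) = x + p * (n + 1 + 1) := by ring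
    simp [abelP, Nat.factorial_succ, derivative_pow]
    rw [e]
    field_simp
    ring

open Polynomial in
theorem abelP_conv_poly (c p y : ℚ) (n : ℕ) :
    ∑ ij ∈ Finset.HasAntidiagonal.antidiagonal n, abelP c p ij.1 * C ((abelP c p ij.2).eval y)
      = (abelP c p n).comp (X + C y) := by
  induction n with
  | zero => simp [abelP]
  | succ n ih =>
    rw [← sub_eq_zero]
    have hd : derivative (∑ ij ∈ Finset.HasAntidiagonal.antidiagonal (n + 1),
        abelP c p ij.1 * C ((abelP c p ij.2).eval y)
          - (abelP c p (n + 1)).comp (X + C y)) = 0 := by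
      rw [derivative_sub, derivative_comp, abelP_deriv, Finset.Nat.sum_antidiagonal_succ]
      have ih' := congrArg (fun P => C c * P.comp (X + C p)) ih
      simp only [Polynomial.sum_comp, mul_comp, C_comp, comp_assoc, add_comp, X_comp,
        Finset.mul_sum] at ih'
      simp only [derivative_add, derivative_sum, derivative_mul, abelP_deriv, derivative_C,
        mul_zero, add_zero, derivative_X, one_mul, mul_comp, C_comp, comp_assoc, add_comp, X_comp]
      have e : (X + C y + C p : ℚ[X]) = X + C p + C y := by ring
      rw [e, ← ih']
      simp [abelP, mul_assoc, Finset.mul_sum]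
    rw [eq_C_of_derivative_eq_zero hd, coeff_zero_eq_eval_zero,
      Finset.Nat.sum_antidiagonal_succ]
    simp [abelP, eval_finsetSum]

theorem abelP_conv (c p x y : ℚ) (n : ℕ) :
    ∑ ij ∈ Finset.HasAntidiagonal.antidiagonal n, (abelP c p ij.1).eval x * (abelP c p ij.2).eval y
      = (abelP c p n).eval (x + y) := by
  have := congrArg (Polynomial.eval x) (abelP_conv_poly c p y n)
  simpa [Polynomial.eval_finsetSum] using this

theorem sum_tuple_succ (f : ℕ → ℚ) (m n : ℕ) :
    ∑ j ∈ Finset.Nat.antidiagonalTuple (m + 1) n, ∏ i, f (j i)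
      = ∑ ij ∈ Finset.HasAntidiagonal.antidiagonal n,
          f ij.1 * ∑ j ∈ Finset.Nat.antidiagonalTuple m ij.2, ∏ i, f (j i) := by
  simp_rw [Finset.mul_sum]
  rw [Finset.sum_sigma']
  refine Finset.sum_bij' (fun j _ => ⟨(j 0, ∑ i, Fin.tail j i), Fin.tail j⟩)
    (fun s _ => Fin.cons s.1.1 s.2) ?_ ?_ ?_ ?_ ?_
  · intro j hj
    rw [Finset.Nat.mem_antidiagonalTuple, Fin.sum_univ_succ] at hj
    simp [Finset.Nat.mem_antidiagonalTuple, Fin.tail, hj]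
  · rintro ⟨⟨a, b⟩, s⟩ hs
    simp [Finset.Nat.mem_antidiagonalTuple] at hs
    simp [Finset.Nat.mem_antidiagonalTuple, Fin.sum_univ_succ, hs]
  · intro j hj
    simp
  · rintro ⟨⟨a, b⟩, s⟩ hs
    simp [Finset.Nat.mem_antidiagonalTuple] at hs
    simp [hs]
  · intro j hj
    simp [Fin.prod_univ_succ, Fin.tail]

theorem abelP_tuple (c p : ℚ) (m n : ℕ) :
    ∑ j ∈ Finset.Nat.antidiagonalTuple m n, ∏ i, (abelP c p (j i)).eval 1
      = (abelP c p n).eval (m : ℚ) := by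
  induction m generalizing n with
  | zero => cases n <;> simp [abelP]
  | succ m ih =>
    rw [sum_tuple_succ (fun k => (abelP c p k).eval 1)]
    simp_rw [ih]
    rw [abelP_conv]
    congr 1
    push_cast
    ring


/-- For a fixed integer `q ≥ 2`, the sequence `h : ℕ → ℚ` with `h 0 = 1`
and, for `k ≥ 1`,
`h k = ((q-1)k+1)/k · ∑_{j₁+⋯+j_q = k-1} h j₁ ⋯ h j_q`
satisfies `h k = q^k ((q-1)k+1)^(k-1) / k!` for every `k ≥ 0`. -/
theorem stmt_0 (q : ℕ) (hq : 2 ≤ q) (h : ℕ → ℚ)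
    (h0 : h 0 = 1)
    (hrec : ∀ k : ℕ, 1 ≤ k →
      h k = ((((q - 1) * k + 1 : ℕ) : ℚ) / (k : ℚ)) *
        ∑ j ∈ Finset.Nat.antidiagonalTuple q (k - 1), ∏ i : Fin q, h (j i)) :
    ∀ k : ℕ,
      h k = (q : ℚ) ^ k * (((q - 1) * k + 1 : ℕ) : ℚ) ^ (k - 1) / (Nat.factorial k : ℚ) := by

  obtain ⟨p, rfl⟩ : ∃ p, q = p + 1 := ⟨q - 1, by omega⟩
  have key : ∀ k, h k = (abelP ((p + 1 : ℕ) : ℚ) p k).eval 1 := by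
    intro k
    induction k using Nat.strong_induction_on with
    | _ k ih =>
      cases k with
      | zero => simp [abelP, h0]
      | succ k =>
        rw [hrec (k + 1) (by omega)]
        have hs : ∑ j ∈ Finset.Nat.antidiagonalTuple (p + 1) (k + 1 - 1),
            ∏ i : Fin (p + 1), h (j i)
            = (abelP ((p + 1 : ℕ) : ℚ) p k).eval ((p + 1 : ℕ) : ℚ) := by
          rw [← abelP_tuple]
          refine Finset.sum_congr rfl fun j hj => Finset.prod_congr rfl fun i _ => ih _ ?_
          rw [Finset.Nat.mem_antidiagonalTuple] at hj
          have := Finset.single_le_sum (f := j) (fun _ _ => Nat.zero_le _) (Finset.mem_univ i)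
          omega
        rw [hs]
        cases k with
        | zero => simp [abelP]
        | succ k =>
          have hf : ((k.factorial : ℕ) : ℚ) ≠ 0 := by positivity
          have h1 : (k : ℚ) + 1 ≠ 0 := by positivity
          have h2 : (k : ℚ) + 1 + 1 ≠ 0 := by positivity
          have e : (p : ℚ) + 1 + p * ((k : ℚ) + 1) = 1 + p * (k + 1 + 1) := by ring
          simp [abelP, Nat.factorial_succ]
          rw [e]
          field_simp
          ring
  intro k
  rw [key]
  cases k with
  | zero => simp [abelP]
  | succ k =>
    simp [abelP]
    ring
end

section
/- Fix an integer q ≥ 2 and let H = Σ_{k≥0} h_k z^k ∈ ℚ[[z]] with h_k = q^k·((q-1)k+1)^{k-1}/k!. Then H satisfies the formal differential equation H′·(1 − q(q-1)·z·H^{q-1}) = q·H^q, where H′ denotes the formal derivative of H. -/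
open PowerSeries

/-- Abel-type series `F_a`. -/
noncomputable def abF (c m a : ℚ) : PowerSeries ℚ :=
  PowerSeries.mk fun k => Nat.casesOn k 1
    (fun j => a * (a + m * (j + 1)) ^ j * c ^ (j + 1) / ((j + 1).factorial : ℚ))

/-- Abel-type series `G_a`. -/
noncomputable def abG (c m a : ℚ) : PowerSeries ℚ :=
  PowerSeries.mk fun k => (a + m * k) ^ k * c ^ k / (k.factorial : ℚ)

theorem abF_deriv (c m a : ℚ) :
    PowerSeries.derivative ℚ (abF c m a) = PowerSeries.C (a * c) * abG c m (a + m) := by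
  ext n
  rw [PowerSeries.coeff_derivative, PowerSeries.coeff_C_mul]
  simp only [abF, abG, PowerSeries.coeff_mk]
  have h1 : ((n.factorial : ℕ) : ℚ) ≠ 0 := by exact_mod_cast n.factorial_ne_zero
  have h2 : (n : ℚ) + 1 ≠ 0 := by positivity
  rw [Nat.factorial_succ]
  push_cast
  field_simp
  ring

theorem abG_eq (c m a : ℚ) :
    abG c m a = abF c m a + PowerSeries.C (c * m) * (PowerSeries.X * abG c m (a + m)) := by
  ext n
  rw [map_add, PowerSeries.coeff_C_mul]
  cases n with
  | zero => simp [abF, abG]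
  | succ n =>
    rw [PowerSeries.coeff_succ_X_mul]
    simp only [abF, abG, PowerSeries.coeff_mk]
    have h1 : ((n.factorial : ℕ) : ℚ) ≠ 0 := by exact_mod_cast n.factorial_ne_zero
    have h2 : (n : ℚ) + 1 ≠ 0 := by positivity
    rw [Nat.factorial_succ]
    push_cast
    have h3 : a + m + m * (n : ℚ) = a + m * (n + 1) := by ring
    rw [h3]
    obtain ⟨t, ht⟩ : ∃ t, t = a + m * ((n : ℚ) + 1) := ⟨_, rfl⟩
    rw [← ht]
    have h4 : a = t - m * (n + 1) := by rw [ht]; ring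
    rw [h4]
    field_simp
    ring

theorem ab_mul (c m : ℚ) (n : ℕ) : ∀ a b : ℚ,
    coeff n (abF c m a * abF c m b) = coeff n (abF c m (a + b)) ∧
    coeff n (abF c m a * abG c m b) = coeff n (abG c m (a + b)) := by
  induction n with
  | zero => intro a b; simp [abF, abG]
  | succ n ih =>
    have key : ∀ a b : ℚ,
        coeff (n + 1) (abF c m a * abF c m b) = coeff (n + 1) (abF c m (a + b)) := by
      intro a b
      have h2 : (n : ℚ) + 1 ≠ 0 := by positivity
      apply mul_right_cancel₀ h2
      rw [← PowerSeries.coeff_derivative, ← PowerSeries.coeff_derivative,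
        Derivation.leibniz,
        abF_deriv, abF_deriv, abF_deriv]
      have e : abF c m a • (C (b * c) * abG c m (b + m)) + abF c m b • (C (a * c) * abG c m (a + m))
          = C (b * c) * (abF c m a * abG c m (b + m)) + C (a * c) * (abF c m b * abG c m (a + m)) := by
        simp only [smul_eq_mul]; ring
      rw [e, map_add, coeff_C_mul, coeff_C_mul, coeff_C_mul, (ih _ _).2, (ih _ _).2,
        show b + (a + m) = a + b + m by ring, show a + (b + m) = a + b + m by ring]
      ring
    intro a b
    refine ⟨key a b, ?_⟩
    have e : abF c m a * abG c m b = abF c m a * abF c m b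
        + C (c * m) * (X * (abF c m a * abG c m (b + m))) := by
      rw [abG_eq c m b]; ring
    rw [e, abG_eq c m (a + b), map_add, map_add, key, coeff_C_mul, coeff_C_mul,
      coeff_succ_X_mul, coeff_succ_X_mul, (ih _ _).2, add_assoc]

theorem abF_mul (c m a b : ℚ) : abF c m a * abF c m b = abF c m (a + b) := by
  ext n; exact (ab_mul c m n a b).1

theorem abFG_mul (c m a b : ℚ) : abF c m a * abG c m b = abG c m (a + b) := by
  ext n; exact (ab_mul c m n a b).2

theorem abF_pow (c m : ℚ) (n : ℕ) : abF c m 1 ^ n = abF c m n := by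
  induction n with
  | zero =>
    ext k
    cases k <;> simp [abF, PowerSeries.coeff_one]
  | succ n ih => rw [pow_succ, ih, abF_mul]; push_cast; rfl

/-- For `q ≥ 2`, the power series `H = ∑ h_k z^k` with
`h_k = q^k((q-1)k+1)^(k-1)/k!` satisfies the formal differential equation
`H′·(1 − q(q-1)·z·H^(q-1)) = q·H^q`. -/
theorem stmt_7 (q : ℕ) (hq : 2 ≤ q)
    (H : PowerSeries ℚ)
    (hH : H = PowerSeries.mk fun k =>
      (q : ℚ) ^ k * (((q - 1) * k + 1 : ℕ) : ℚ) ^ (k - 1) / (Nat.factorial k : ℚ)) :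
    (PowerSeries.derivative ℚ H) *
        (1 - ((q * (q - 1) : ℕ) : ℚ) • (PowerSeries.X * H ^ (q - 1)))
      = ((q : ℕ) : ℚ) • (H ^ q) := by
  obtain ⟨m, rfl⟩ : ∃ m, q = m + 1 := ⟨q - 1, by omega⟩
  simp only [Nat.add_sub_cancel] at *
  have h : H = abF ((m + 1 : ℕ) : ℚ) m 1 := by
    rw [hH]
    ext k
    cases k with
    | zero => simp [abF]
    | succ k =>
      simp only [abF, PowerSeries.coeff_mk, Nat.add_sub_cancel]
      push_cast
      ring
  clear hH
  subst h
  rw [abF_pow, abF_pow, abF_deriv, PowerSeries.smul_eq_C_mul, PowerSeries.smul_eq_C_mul]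
  have e1 := abG_eq ((m + 1 : ℕ) : ℚ) m (1 + m)
  have e2 := abFG_mul ((m + 1 : ℕ) : ℚ) m m (1 + m)
  rw [show (m : ℚ) + (1 + m) = 1 + m + m by ring] at e2
  rw [← e2] at e1
  rw [show abF ((m + 1 : ℕ) : ℚ) m ((m + 1 : ℕ) : ℚ) = abF ((m + 1 : ℕ) : ℚ) m (1 + m) by
    push_cast; rw [add_comm (m : ℚ) 1]]
  rw [one_mul, Nat.cast_mul]
  linear_combination C ((m + 1 : ℕ) : ℚ) * e1
end

section
/- Fix an integer q ≥ 2. As formal power series in ℚ[[z]], exp( q · Σ_{k≥1} (q(q-1))^{k-1}·k^{k-1}·z^k/k! ) = Σ_{k≥0} q^k·((q-1)k+1)^{k-1}·z^k/k!. -/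
open PowerSeries

/-- The formal exponential `exp F = ∑_{n≥0} Fⁿ/n!` of a formal power series `F ∈ ℚ[[z]]`
with zero constant term, given coefficient-wise. -/
noncomputable def expPS (F : PowerSeries ℚ) : PowerSeries ℚ :=
  PowerSeries.mk fun n =>
    ∑ m ∈ Finset.range (n + 1), (PowerSeries.coeff n (F ^ m)) / (Nat.factorial m : ℚ)

noncomputable def abelA (x a : ℚ) (k : ℕ) : ℚ := if k = 0 then 1 else x * (x + a * k) ^ (k - 1)

lemma abel_zero (x a : ℚ) (n : ℕ) :
    ∑ k ∈ Finset.range (n + 2), ((n + 1).choose k : ℚ) * abelA x a k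
      * (-x - a * k) ^ (n + 1 - k) = 0 := by
  have h := congrFun (Polynomial.fwdDiff_iter_eq_zero_of_degree_lt
    (P := (Polynomial.C x + Polynomial.C a * Polynomial.X) ^ n) (n := n + 1) (by
      refine Nat.lt_succ_of_le (Polynomial.natDegree_pow_le_of_le n (m := 1) ?_ |>.trans (by simp))
      compute_degree)) 0
  rw [fwdDiff_iter_eq_sum_shift] at h
  have h2 := congrArg (fun t => x * t) h
  simp only [Pi.zero_apply, mul_zero, Finset.mul_sum] at h2
  rw [← h2]
  apply Finset.sum_congr rfl
  intro k hk
  have hk' : k ≤ n + 1 := by simpa [Nat.lt_succ_iff] using hk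
  have e : (-x - a * k) ^ (n + 1 - k) = (-1) ^ (n + 1 - k) * (x + a * k) ^ (n + 1 - k) := by
    rw [← mul_pow]; ring
  rw [e]
  simp only [abelA, zsmul_eq_mul, Polynomial.eval_pow, Polynomial.eval_add, Polynomial.eval_mul,
    Polynomial.eval_C, Polynomial.eval_X, zero_add, nsmul_eq_mul, mul_one]
  push_cast
  split_ifs with h0
  · subst h0; simp; ring
  · have : (x + a * k) ^ n = (x + a * k) ^ (k - 1) * (x + a * k) ^ (n + 1 - k) := by
      rw [← pow_add]; congr 1; omega
    rw [this]; ring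

lemma abel_poly (x a : ℚ) (n : ℕ) :
    ∑ k ∈ Finset.range (n + 1), Polynomial.C ((n.choose k : ℚ) * abelA x a k)
      * (Polynomial.X - Polynomial.C (a * k)) ^ (n - k)
      = (Polynomial.X + Polynomial.C x) ^ n := by
  induction n with
  | zero => simp [abelA]
  | succ n ih =>
    rw [← sub_eq_zero]
    set D := ∑ k ∈ Finset.range (n + 1 + 1), Polynomial.C (((n + 1).choose k : ℚ) * abelA x a k)
      * (Polynomial.X - Polynomial.C (a * k)) ^ (n + 1 - k)
      - (Polynomial.X + Polynomial.C x) ^ (n + 1) with hD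
    have hd : Polynomial.derivative D = 0 := by
      rw [hD, Polynomial.derivative_sub, Polynomial.derivative_sum, Finset.sum_range_succ,
        Polynomial.derivative_X_add_C_pow, sub_eq_zero]
      simp only [Polynomial.derivative_C_mul, Polynomial.derivative_X_sub_C_pow]
      rw [Nat.add_sub_cancel, ← ih, Finset.mul_sum]
      simp only [Nat.sub_self, Nat.cast_zero, map_zero, zero_mul, mul_zero, add_zero]
      apply Finset.sum_congr rfl
      intro k hk
      have hk' : k ≤ n := by simpa [Nat.lt_succ_iff] using hk
      have h1 : ((n.choose k : ℚ)) * ((n + 1 : ℕ) : ℚ)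
          = ((n + 1).choose k : ℚ) * ((n + 1 - k : ℕ) : ℚ) := by
        exact_mod_cast Nat.choose_mul_succ_eq n k
      have h2 : n + 1 - k - 1 = n - k := by omega
      rw [h2, ← mul_assoc, ← mul_assoc, ← Polynomial.C_mul, ← Polynomial.C_mul]
      congr 2
      linear_combination (-abelA x a k) * h1
    rw [Polynomial.eq_C_of_derivative_eq_zero hd]
    have he : Polynomial.eval (-x) D = 0 := by
      rw [hD]
      simp only [Polynomial.eval_sub, Polynomial.eval_finsetSum, Polynomial.eval_mul,
        Polynomial.eval_C, Polynomial.eval_pow, Polynomial.eval_X, Polynomial.eval_add]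
      rw [abel_zero]; simp
    rw [Polynomial.eq_C_of_derivative_eq_zero hd, Polynomial.eval_C] at he
    rw [he, map_zero]

lemma abel (x a y : ℚ) (n : ℕ) :
    ∑ k ∈ Finset.range (n + 1), ((n.choose k : ℚ) * abelA x a k) * (y - a * k) ^ (n - k)
      = (y + x) ^ n := by
  have := congrArg (Polynomial.eval y) (abel_poly x a n)
  simpa [Polynomial.eval_finsetSum] using this

lemma coeff_pow_zero (F : PowerSeries ℚ) (hF : constantCoeff F = 0) {n m : ℕ} (h : n < m) :
    coeff n (F ^ m) = 0 :=
  X_pow_dvd_iff.1 (pow_dvd_pow_of_dvd (X_dvd_iff.2 hF) m) n h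

lemma coeff_expPS (F : PowerSeries ℚ) (hF : constantCoeff F = 0) {n N : ℕ} (h : n < N) :
    coeff n (expPS F) =
      coeff n (∑ m ∈ Finset.range N, ((Nat.factorial m : ℚ)⁻¹) • F ^ m) := by
  rw [expPS, coeff_mk, map_sum]
  have : Finset.range (n + 1) ⊆ Finset.range N := Finset.range_subset_range.2 h
  rw [← Finset.sum_subset this]
  · apply Finset.sum_congr rfl
    intro m _
    rw [coeff_smul, smul_eq_mul]; ring
  · intro m _ hm
    rw [coeff_smul, coeff_pow_zero F hF (by simpa using hm)]; simp

lemma deriv_expPS (F : PowerSeries ℚ) (hF : constantCoeff F = 0) :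
    d⁄dX ℚ (expPS F) = d⁄dX ℚ F * expPS F := by
  ext n
  rw [coeff_derivative, coeff_expPS F hF (Nat.lt_succ_self (n + 1)), ← coeff_derivative]
  have : d⁄dX ℚ (∑ m ∈ Finset.range (n + 1 + 1), ((Nat.factorial m : ℚ)⁻¹) • F ^ m)
      = d⁄dX ℚ F * ∑ m ∈ Finset.range (n + 1), ((Nat.factorial m : ℚ)⁻¹) • F ^ m := by
    rw [Finset.sum_range_succ', map_add, map_sum, Finset.mul_sum]
    simp only [pow_zero, Derivation.map_smul, derivative_one, smul_zero, add_zero]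
    apply Finset.sum_congr rfl
    intro m _
    rw [derivative_pow, Nat.add_sub_cancel, mul_smul_comm, Nat.factorial_succ]
    have : ((m + 1 : ℕ) : PowerSeries ℚ) = C ((m + 1 : ℕ) : ℚ) := by simp
    rw [this, smul_eq_C_mul, smul_eq_C_mul]
    have h3 : (((m + 1) * m.factorial : ℕ) : ℚ)⁻¹ * ((m + 1 : ℕ) : ℚ) = (m.factorial : ℚ)⁻¹ := by
      have := Nat.factorial_ne_zero m
      push_cast; field_simp
    rw [← h3, map_mul]; ring
  rw [Nat.succ_eq_add_one, this, coeff_mul, coeff_mul]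
  apply Finset.sum_congr rfl
  intro p hp
  rw [coeff_expPS F hF (N := n + 1)]
  have := Finset.HasAntidiagonal.mem_antidiagonal.1 hp
  omega

lemma ode_unique (G E H : PowerSeries ℚ) (hE : d⁄dX ℚ E = G * E) (hH : d⁄dX ℚ H = G * H)
    (h0 : coeff 0 E = coeff 0 H) : E = H := by
  ext n
  induction n using Nat.strong_induction_on with
  | _ n ih =>
    cases n with
    | zero => exact h0
    | succ n =>
      have h1 := congrArg (coeff n) hE
      have h2 := congrArg (coeff n) hH
      rw [coeff_derivative, coeff_mul] at h1 h2
      have : (n + 1 : ℚ) ≠ 0 := by positivity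
      apply mul_right_cancel₀ this
      rw [h1, h2]
      apply Finset.sum_congr rfl
      intro p hp
      rw [ih]
      have := Finset.HasAntidiagonal.mem_antidiagonal.1 hp
      omega

/-- For `q ≥ 2`, as formal power series in `ℚ[[z]]`,
`exp(q · ∑_{k≥1} (q(q-1))^(k-1)·k^(k-1)·z^k/k!) = ∑_{k≥0} q^k·((q-1)k+1)^(k-1)·z^k/k!`. -/
theorem stmt_10 (q : ℕ) (hq : 2 ≤ q) :
    expPS ((q : ℚ) • PowerSeries.mk fun k =>
        if k = 0 then 0
        else ((q * (q - 1) : ℕ) : ℚ) ^ (k - 1) * (k : ℚ) ^ (k - 1) / (Nat.factorial k : ℚ))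
      = PowerSeries.mk fun k =>
        (q : ℚ) ^ k * (((q - 1) * k + 1 : ℕ) : ℚ) ^ (k - 1) / (Nat.factorial k : ℚ) := by
  set F : PowerSeries ℚ := (q : ℚ) • PowerSeries.mk fun k =>
        if k = 0 then 0
        else ((q * (q - 1) : ℕ) : ℚ) ^ (k - 1) * (k : ℚ) ^ (k - 1) / (Nat.factorial k : ℚ) with hFd
  have hF : constantCoeff F = 0 := by
    rw [← coeff_zero_eq_constantCoeff_apply, hFd, coeff_smul, coeff_mk]; simp
  set a : ℚ := ((q * (q - 1) : ℕ) : ℚ) with ha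
  have hH : (PowerSeries.mk fun k =>
        (q : ℚ) ^ k * (((q - 1) * k + 1 : ℕ) : ℚ) ^ (k - 1) / (Nat.factorial k : ℚ))
      = PowerSeries.mk fun k => abelA q a k / (Nat.factorial k : ℚ) := by
    ext k
    rw [coeff_mk, coeff_mk]
    congr 1
    rw [abelA]
    split_ifs with h0
    · subst h0; simp
    · obtain ⟨j, rfl⟩ := Nat.exists_eq_succ_of_ne_zero h0
      rw [ha, Nat.succ_sub_one, pow_succ', mul_assoc, ← mul_pow]
      congr 2
      push_cast; ring
  rw [hH]
  refine ode_unique (d⁄dX ℚ F) _ _ (deriv_expPS F hF) ?_ ?_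
  · ext n
    rw [coeff_derivative, coeff_mk, coeff_mul, ← Finset.Nat.sum_antidiagonal_swap,
      Finset.Nat.sum_antidiagonal_eq_sum_range_succ_mk]
    have hab := abel q a (a * (n + 1)) n
    have hn := Nat.factorial_ne_zero n
    have e1 : abelA q a (n + 1) / ((n + 1).factorial : ℚ) * (n + 1)
        = q * (a * (n + 1) + q) ^ n / (n.factorial : ℚ) := by
      rw [abelA, if_neg (Nat.succ_ne_zero n), Nat.add_sub_cancel, Nat.factorial_succ]
      push_cast
      have : (n + 1 : ℚ) ≠ 0 := by positivity
      field_simp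
      ring
    rw [e1, ← hab, Finset.mul_sum, Finset.sum_div]
    apply Finset.sum_congr rfl
    intro k hk
    have hk' : k ≤ n := by simpa [Nat.lt_succ_iff] using hk
    obtain ⟨j, rfl⟩ := Nat.exists_eq_add_of_le hk'
    simp only [Prod.swap, Nat.add_sub_cancel_left]
    rw [coeff_derivative, coeff_mk, hFd, coeff_smul, coeff_mk, if_neg (Nat.succ_ne_zero j),
      Nat.add_sub_cancel, Nat.factorial_succ, Nat.cast_choose ℚ (Nat.le_add_right k j),
      Nat.add_sub_cancel_left, smul_eq_mul]
    have h1 := Nat.factorial_ne_zero k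
    have h2 := Nat.factorial_ne_zero j
    have h3 : a * (((k + j : ℕ) : ℚ) + 1) - a * k = a * (j + 1) := by push_cast; ring
    rw [h3, mul_pow]
    push_cast
    have : (j + 1 : ℚ) ≠ 0 := by positivity
    field_simp
  · simp [expPS, abelA]
end
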